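/- Let λ > 0 and let u be a real-valued solution of Δu + λ²u = 0 on ℝⁿ. If u is nonvanishing on the closed ball B̄(x⁰, r), then λ r < c_n, where c_n denotes the first positive zero of the Bessel function J_{(n−2)/2}. Equivalently: every real solution of the Helmholtz equation (Δ+λ²)u = 0 on ℝⁿ has a zero in every closed ball of radius c_n/λ. -/

import Mathlib

open Metric Set

noncomputable section

/-- The Laplacian of a real-valued function on Euclidean space. -/
def lap {n : ℕ} (u : EuclideanSpace ℝ (Fin n) → ℝ) (x : EuclideanSpace ℝ (Fin n)) : ℝ :=
  ∑ i : Fin n, fderiv ℝ (fun y => fderiv ℝ u y (EuclideanSpace.single i 1)) x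
    (EuclideanSpace.single i 1)

/-- The Bessel function of the first kind of order `ν`, via its power series (for `x > 0`). -/
def besselJ (ν x : ℝ) : ℝ :=
  ∑' m : ℕ, ((-1 : ℝ) ^ m / (m.factorial * Real.Gamma (m + ν + 1))) *
    (x / 2) ^ (2 * m) * (x / 2) ^ ν

/-- `c_n`: the first positive zero of the Bessel function `J_{(n-2)/2}`. -/
def besselZero (n : ℕ) : ℝ :=
  sInf {t : ℝ | 0 < t ∧ besselJ (((n : ℝ) - 2) / 2) t = 0}

/-!
A positive function `w` with `Δw + Vw ≤ 0`, `V ≥ 0`, forces a maximum principle for `Δ + V`: if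
`Δv + Vv ≥ 0` and `v ≤ 0` on the boundary, then `v ≤ 0`. Otherwise `M = max v / w` is positive and
`v - M w ≤ 0` is subharmonic, negative on the boundary, and yet attains the value `0`.
Up to its sign, a Helmholtz solution without zeros on a ball of radius `r ≥ c_n / λ` is such a `w`
with `V = (c_n / r)²`. The rescaled radial solution `|x - x₀| ^ ((2 - n) / 2) J_{(n - 2) / 2}`,
which vanishes on the sphere of radius `r` and is positive at the centre, contradicts the principle.
The power of `|x - x₀|` cancels the singular factor of `J`, so this solution is written in terms of
the entire Bessel–Clifford function and its smoothness is immediate.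
-/

open Filter InnerProductSpace Laplacian Module Topology

section LaplacianFormulas

theorem iteratedDeriv_two_nonpos_of_isLocalMax {f : ℝ → ℝ} {a : ℝ} (hf : ContinuousAt f a)
    (hmax : IsLocalMax f a) : iteratedDeriv 2 f a ≤ 0 := by
  by_contra! hpos
  have hmin : IsLocalMin f a := by
    refine isLocalMin_of_deriv_deriv_pos ?_ hmax.deriv_eq_zero hf
    rwa [iteratedDeriv_succ, iteratedDeriv_one] at hpos
  have hconst : f =ᶠ[𝓝 a] fun _ ↦ f a := by
    filter_upwards [hmax, hmin] with t hle hge using le_antisymm hle hge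
  simp [hconst.iteratedDeriv_eq 2, iteratedDeriv_const] at hpos

variable {E F : Type*} [NormedAddCommGroup E] [InnerProductSpace ℝ E] [FiniteDimensional ℝ E]
  [NormedAddCommGroup F] [NormedSpace ℝ F]

theorem laplacian_eq_sum_iteratedDeriv_two {ι : Type*} [Fintype ι] (b : OrthonormalBasis ι ℝ E)
    {f : E → F} {x : E} (hf : ContDiffAt ℝ 2 f x) :
    Δ f x = ∑ i, iteratedDeriv 2 (fun t : ℝ ↦ f (x + t • b i)) 0 := by
  rw [laplacian_eq_iteratedFDeriv_orthonormalBasis f b]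
  refine Finset.sum_congr rfl fun i _ ↦ ?_
  have hderiv : deriv (fun t : ℝ ↦ x + t • b i) = fun _ ↦ b i := by
    ext1 t
    simpa using (((hasDerivAt_id t).smul_const (b i)).const_add x).deriv
  have hderiv₂ : iteratedDeriv 2 (fun t : ℝ ↦ x + t • b i) 0 = 0 := by
    simp [iteratedDeriv_succ, hderiv]
  have hx : x + (0 : ℝ) • b i = x := by simp
  have hchain := iteratedDeriv_vcomp_two (g := f) (f := fun t : ℝ ↦ x + t • b i) (x := 0)
    (by rwa [hx]) (by fun_prop)
  rw [Function.comp_def, hderiv, hderiv₂, hx, map_zero, add_zero] at hchain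
  rw [hchain]
  congr 1
  ext j
  fin_cases j <;> rfl

theorem laplacian_nonpos_of_isLocalMax {f : E → ℝ} {x : E} (hf : ContDiffAt ℝ 2 f x)
    (hmax : IsLocalMax f x) : Δ f x ≤ 0 := by
  rw [laplacian_eq_sum_iteratedDeriv_two (stdOrthonormalBasis ℝ E) hf]
  refine Finset.sum_nonpos fun i _ ↦ ?_
  set e := stdOrthonormalBasis ℝ E i
  have hline : Tendsto (fun t : ℝ ↦ x + t • e) (𝓝 0) (𝓝 x) :=
    Continuous.tendsto' (by fun_prop) _ _ (by simp)
  refine iteratedDeriv_two_nonpos_of_isLocalMax ?_ ?_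
  · exact hf.continuousAt.comp_of_eq (by fun_prop) (by simp)
  · simpa [IsLocalMax, IsMaxFilter] using hline.eventually hmax

theorem iteratedDeriv_two_comp_quadratic {f : ℝ → F} {a b c : ℝ} (hf : ContDiffAt ℝ 2 f a) :
    iteratedDeriv 2 (fun t ↦ f (a + b * t + c * t ^ 2)) 0
      = b ^ 2 • iteratedDeriv 2 f a + (2 * c) • deriv f a := by
  set q : ℝ → ℝ := fun t ↦ a + b * t + c * t ^ 2
  have hq₀ : q 0 = a := by simp [q]
  have hderiv : deriv q = fun t ↦ b + 2 * c * t := by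
    ext t
    have hq : HasDerivAt q (b * 1 + c * (2 * t)) t := by
      simpa using (((hasDerivAt_id t).const_mul b).const_add a).fun_add
        ((hasDerivAt_pow 2 t).const_mul c)
    rw [hq.deriv]
    ring
  have hderiv₂ : iteratedDeriv 2 q 0 = 2 * c := by
    rw [iteratedDeriv_succ, iteratedDeriv_one, hderiv]
    simp
  have hchain := iteratedDeriv_scomp_two (g := f) (f := q) (x := 0) (by rwa [hq₀]) (by fun_prop)
  simpa [Function.comp_def, hderiv, hderiv₂, hq₀] using hchain

theorem laplacian_comp_norm_sub_sq {f : ℝ → F} {x₀ x : E}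
    (hf : ContDiffAt ℝ 2 f (‖x - x₀‖ ^ 2)) :
    Δ (fun y ↦ f (‖y - x₀‖ ^ 2)) x = (4 * ‖x - x₀‖ ^ 2) • iteratedDeriv 2 f (‖x - x₀‖ ^ 2)
      + (2 * finrank ℝ E : ℝ) • deriv f (‖x - x₀‖ ^ 2) := by
  set b := stdOrthonormalBasis ℝ E
  have hline (i) (t : ℝ) : ‖x + t • b i - x₀‖ ^ 2
      = ‖x - x₀‖ ^ 2 + 2 * inner ℝ (x - x₀) (b i) * t + 1 * t ^ 2 := by
    rw [add_sub_right_comm, norm_add_sq_real, inner_smul_right, norm_smul, b.norm_eq_one,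
      mul_one, Real.norm_eq_abs, sq_abs]
    ring
  have hcomp : ContDiffAt ℝ 2 (fun y : E ↦ f (‖y - x₀‖ ^ 2)) x :=
    hf.comp x ((contDiff_id.sub contDiff_const).norm_sq ℝ).contDiffAt
  have hsum : ∑ i, (2 * inner ℝ (x - x₀) (b i)) ^ 2 = 4 * ‖x - x₀‖ ^ 2 := by
    simp_rw [mul_pow, ← Finset.mul_sum, b.sum_sq_inner_left]
    norm_num
  simp only [laplacian_eq_sum_iteratedDeriv_two b hcomp, hline,
    iteratedDeriv_two_comp_quadratic hf, Finset.sum_add_distrib, ← Finset.sum_smul, hsum]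
  simp [mul_comm]

theorem laplacian_norm_sq (x : E) : Δ (fun y : E ↦ ‖y‖ ^ 2) x = 2 * finrank ℝ E := by
  have hid : iteratedDeriv 2 (id : ℝ → ℝ) (‖x‖ ^ 2) = 0 := by
    simp [iteratedDeriv_succ]
  simpa [hid] using laplacian_comp_norm_sub_sq (f := id) (x₀ := 0) (x := x) contDiffAt_id

end LaplacianFormulas

section MaximumPrinciple

variable {E : Type*} [NormedAddCommGroup E] [InnerProductSpace ℝ E] [FiniteDimensional ℝ E]
  {Ω : Set E}

theorem exists_mem_frontier_isMaxOn_of_laplacian_pos {f : E → ℝ} (hΩ : IsOpen Ω)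
    (hΩ_bdd : Bornology.IsBounded Ω) (hΩ_ne : Ω.Nonempty) (hfc : ContinuousOn f (closure Ω))
    (hf : ContDiffOn ℝ 2 f Ω) (hΔ : ∀ x ∈ Ω, 0 < Δ f x) :
    ∃ x ∈ frontier Ω, IsMaxOn f (closure Ω) x := by
  obtain ⟨x, hx, hmax⟩ := hΩ_bdd.isCompact_closure.exists_isMaxOn hΩ_ne.closure hfc
  refine ⟨x, ⟨hx, fun hxi ↦ ?_⟩, hmax⟩
  rw [hΩ.interior_eq] at hxi
  have hx_nhds := hΩ.mem_nhds hxi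
  have hloc : IsLocalMax f x := (hmax.on_subset subset_closure).isLocalMax hx_nhds
  exact (hΔ x hxi).not_ge (laplacian_nonpos_of_isLocalMax (hf.contDiffAt hx_nhds) hloc)

theorem le_of_laplacian_nonneg_of_le_frontier [Nontrivial E] {f : E → ℝ} {c : ℝ} (hΩ : IsOpen Ω)
    (hΩ_bdd : Bornology.IsBounded Ω) (hfc : ContinuousOn f (closure Ω))
    (hf : ContDiffOn ℝ 2 f Ω) (hΔ : ∀ x ∈ Ω, 0 ≤ Δ f x) (hbd : ∀ x ∈ frontier Ω, f x ≤ c)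
    {x : E} (hx : x ∈ closure Ω) : f x ≤ c := by
  obtain ⟨R, hR⟩ := hΩ_bdd.closure.exists_norm_le
  have hn : (0 : ℝ) < finrank ℝ E := mod_cast finrank_pos
  have hsq : ContDiff ℝ 2 fun y : E ↦ ‖y‖ ^ 2 := contDiff_id.norm_sq ℝ
  have hperturbed (ε : ℝ) (hε : 0 < ε) : f x ≤ c + ε * R ^ 2 := by
    have hεsq : ContDiff ℝ 2 (ε • fun y : E ↦ ‖y‖ ^ 2) := hsq.const_smul ε
    obtain ⟨y, hy, hmax⟩ := exists_mem_frontier_isMaxOn_of_laplacian_pos hΩ hΩ_bdd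
      (closure_nonempty_iff.1 ⟨x, hx⟩) (hfc.add hεsq.continuous.continuousOn)
      (hf.add hεsq.contDiffOn) fun z hz ↦ by
        rw [(hf.contDiffAt (hΩ.mem_nhds hz)).laplacian_add hεsq.contDiffAt,
          laplacian_smul ε hsq.contDiffAt, laplacian_norm_sq, smul_eq_mul]
        have := hΔ z hz
        positivity
    calc f x ≤ f x + ε * ‖x‖ ^ 2 := le_add_of_nonneg_right (by positivity)
      _ ≤ f y + ε * ‖y‖ ^ 2 := hmax hx
      _ ≤ c + ε * R ^ 2 := by
        gcongr
        · exact hbd y hy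
        · exact hR y (frontier_subset_closure hy)
  have hlim : Tendsto (fun ε : ℝ ↦ c + ε * R ^ 2) (𝓝[>] 0) (𝓝 c) :=
    (Continuous.tendsto' (by fun_prop) _ _ (by simp)).mono_left nhdsWithin_le_nhds
  exact ge_of_tendsto hlim (eventually_mem_nhdsWithin.mono hperturbed)

theorem nonpos_of_laplacian_add_mul_nonneg [Nontrivial E] {V v w : E → ℝ} (hΩ : IsOpen Ω)
    (hΩ_bdd : Bornology.IsBounded Ω) (hV : ∀ x ∈ Ω, 0 ≤ V x)
    (hwc : ContinuousOn w (closure Ω)) (hw : ContDiffOn ℝ 2 w Ω)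
    (hw_pos : ∀ x ∈ closure Ω, 0 < w x) (hw_super : ∀ x ∈ Ω, Δ w x + V x * w x ≤ 0)
    (hvc : ContinuousOn v (closure Ω)) (hv : ContDiffOn ℝ 2 v Ω)
    (hv_sub : ∀ x ∈ Ω, 0 ≤ Δ v x + V x * v x) (hbd : ∀ x ∈ frontier Ω, v x ≤ 0)
    {x : E} (hx : x ∈ closure Ω) : v x ≤ 0 := by
  by_contra! hvx
  have hcompact := hΩ_bdd.isCompact_closure
  obtain ⟨p, hp, hmax⟩ := hcompact.exists_isMaxOn ⟨x, hx⟩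
    (hvc.div hwc fun y hy ↦ (hw_pos y hy).ne')
  obtain ⟨q, hq, hmin⟩ := hcompact.exists_isMinOn ⟨x, hx⟩ hwc
  set M := v p / w p
  have hM : 0 < M := (div_pos hvx (hw_pos x hx)).trans_le (hmax hx)
  have hle (y) (hy : y ∈ closure Ω) : v y ≤ M * w y := (div_le_iff₀ (hw_pos y hy)).1 (hmax hy)
  have hΔ (y) (hy : y ∈ Ω) : 0 ≤ Δ (v - M • w) y := by
    have hwy := hw.contDiffAt (hΩ.mem_nhds hy)
    have hMwy : ContDiffAt ℝ 2 (M • w) y := hwy.const_smul M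
    rw [(hv.contDiffAt (hΩ.mem_nhds hy)).laplacian_sub hMwy, laplacian_smul M hwy, smul_eq_mul]
    have hV_le := mul_le_mul_of_nonneg_left (hle y (subset_closure hy)) (hV y hy)
    have hMw := mul_nonpos_of_nonneg_of_nonpos hM.le (hw_super y hy)
    linarith [hv_sub y hy]
  have hfrontier (y) (hy : y ∈ frontier Ω) : (v - M • w) y ≤ -(M * w q) := by
    have hwq := mul_le_mul_of_nonneg_left (hmin (frontier_subset_closure hy)) hM.le
    simpa using (add_le_add (hbd y hy) (neg_le_neg hwq))
  have hneg := le_of_laplacian_nonneg_of_le_frontier hΩ hΩ_bdd (hvc.sub (hwc.const_smul M))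
    (hv.sub (hw.const_smul M)) hΔ hfrontier hp
  have hzero : (v - M • w) p = 0 := by simp [M, div_mul_cancel₀ _ (hw_pos p hp).ne']
  linarith [mul_pos hM (hw_pos q hq)]

end MaximumPrinciple

section BesselClifford

/-- The Bessel–Clifford function `C_ν`, the entire function of `z` for which
`J_ν(x) = (x / 2) ^ ν * C_ν(-(x / 2) ^ 2)`. It is defined for every real `ν`: the terms in which
`Γ` has a pole vanish, as they should, because `Real.Gamma` takes the value `0` there. -/
def besselClifford (ν z : ℝ) : ℝ :=
  ∑' m : ℕ, z ^ m / (m.factorial * Real.Gamma (m + ν + 1))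

theorem hasSum_besselClifford (ν z : ℝ) :
    HasSum (fun m : ℕ ↦ z ^ m / (m.factorial * Real.Gamma (m + ν + 1))) (besselClifford ν z) := by
  refine Summable.hasSum ?_
  have hlim : Tendsto (fun m : ℕ ↦ (m : ℝ) + ν + 1) atTop atTop :=
    tendsto_atTop_add_const_right _ _ <|
      tendsto_atTop_add_const_right _ _ tendsto_natCast_atTop_atTop
  refine (Real.summable_pow_div_factorial |z|).of_norm_bounded_eventually_nat ?_
  filter_upwards [hlim.eventually_ge_atTop 2] with m hm
  have hGamma : 1 ≤ Real.Gamma (m + ν + 1) :=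
    Real.Gamma_two.symm.trans_le (Real.Gamma_strictMonoOn_Ici.monotoneOn self_mem_Ici hm hm)
  rw [norm_div, norm_pow, Real.norm_eq_abs, Real.norm_of_nonneg (by positivity)]
  gcongr
  exact le_mul_of_one_le_right (by positivity) hGamma

theorem hasSum_besselClifford_succ (ν z : ℝ) :
    HasSum (fun m : ℕ ↦ z ^ (m + 1) / ((m + 1).factorial * Real.Gamma (m + ν + 2)))
      (besselClifford ν z - (Real.Gamma (ν + 1))⁻¹) := by
  have hshift := (hasSum_nat_add_iff' 1).2 (hasSum_besselClifford ν z)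
  have hGamma (m : ℕ) : ((m + 1 : ℕ) : ℝ) + ν + 1 = m + ν + 2 := by push_cast; ring
  simpa only [hGamma, Finset.sum_range_one, pow_zero, Nat.factorial_zero, Nat.cast_one, one_mul,
    Nat.cast_zero, zero_add, one_div] using hshift

theorem hasDerivAt_besselClifford (ν z : ℝ) :
    HasDerivAt (besselClifford ν) (besselClifford (ν + 1) z) z := by
  have hterm (m : ℕ) (y : ℝ) :
      HasDerivAt (fun y : ℝ ↦ y ^ (m + 1) / ((m + 1).factorial * Real.Gamma (m + ν + 2)))
        (y ^ m / (m.factorial * Real.Gamma (m + (ν + 1) + 1))) y := by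
    refine ((hasDerivAt_pow (m + 1) y).div_const _).congr_deriv ?_
    rw [Nat.factorial_succ, Nat.cast_mul, mul_assoc, mul_div_mul_left _ _ (by positivity),
      add_tsub_cancel_right, show (m : ℝ) + (ν + 1) + 1 = m + ν + 2 by ring]
  have hbound (m : ℕ) (y : ℝ) (hy : y ∈ ball 0 (|z| + 1)) :
      ‖y ^ m / (m.factorial * Real.Gamma (m + (ν + 1) + 1))‖
        ≤ ‖(|z| + 1) ^ m / (m.factorial * Real.Gamma (m + (ν + 1) + 1))‖ := by
    rw [norm_div, norm_div, norm_pow, norm_pow, Real.norm_of_nonneg (by positivity : 0 ≤ |z| + 1)]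
    gcongr
    exact (mem_ball_zero_iff.1 hy).le
  have hz : z ∈ ball (0 : ℝ) (|z| + 1) := by simp
  have htail := hasDerivAt_tsum_of_isPreconnected
    (hasSum_besselClifford (ν + 1) (|z| + 1)).summable.norm isOpen_ball
    (convex_ball _ _).isPreconnected (fun m y _ ↦ hterm m y) hbound hz
    (hasSum_besselClifford_succ ν z).summable hz
  simp only [(hasSum_besselClifford_succ ν _).tsum_eq,
    (hasSum_besselClifford _ z).tsum_eq] at htail
  simpa only [sub_add_cancel] using htail.add_const (Real.Gamma (ν + 1))⁻¹

theorem deriv_besselClifford (ν : ℝ) : deriv (besselClifford ν) = besselClifford (ν + 1) :=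
  funext fun z ↦ (hasDerivAt_besselClifford ν z).deriv

theorem contDiff_besselClifford (ν : ℝ) (k : ℕ) : ContDiff ℝ k (besselClifford ν) := by
  induction k generalizing ν with
  | zero =>
    exact contDiff_zero.2 <| continuous_iff_continuousAt.2 fun z ↦
      (hasDerivAt_besselClifford ν z).continuousAt
  | succ k ih =>
    have hdiff : Differentiable ℝ (besselClifford ν) :=
      fun z ↦ (hasDerivAt_besselClifford ν z).differentiableAt
    exact mod_cast contDiff_succ_iff_deriv.2 ⟨hdiff, by simp, deriv_besselClifford ν ▸ ih _⟩

theorem continuous_besselClifford_neg_half_sq (ν : ℝ) :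
    Continuous fun t : ℝ ↦ besselClifford ν (-(t / 2) ^ 2) :=
  (contDiff_besselClifford ν 0).continuous.comp (by fun_prop)

theorem inv_Gamma_eq_mul_inv_Gamma_add_one (s : ℝ) :
    (Real.Gamma s)⁻¹ = s * (Real.Gamma (s + 1))⁻¹ := by
  rcases eq_or_ne s 0 with rfl | hs
  · simp
  · rw [Real.Gamma_add_one hs, mul_inv, mul_inv_cancel_left₀ hs]

theorem mul_besselClifford_add_two_add (ν z : ℝ) :
    z * besselClifford (ν + 2) z + (ν + 1) * besselClifford (ν + 1) z = besselClifford ν z := by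
  have hcoeff (m : ℕ) : z * (z ^ m / (m.factorial * Real.Gamma (m + (ν + 2) + 1)))
      + (ν + 1) * (z ^ (m + 1) / ((m + 1).factorial * Real.Gamma (m + (ν + 1) + 2)))
      = z ^ (m + 1) / ((m + 1).factorial * Real.Gamma (m + ν + 2)) := by
    rw [div_mul_eq_div_div, div_mul_eq_div_div, div_mul_eq_div_div]
    simp only [div_eq_mul_inv _ (Real.Gamma _)]
    rw [inv_Gamma_eq_mul_inv_Gamma_add_one (m + ν + 2), Nat.factorial_succ]
    push_cast
    field_simp
    ring_nf
  have hsum := ((hasSum_besselClifford (ν + 2) z).mul_left z).add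
    ((hasSum_besselClifford_succ (ν + 1) z).mul_left (ν + 1))
  simp only [hcoeff] at hsum
  have heq := hsum.unique (hasSum_besselClifford_succ ν z)
  rw [inv_Gamma_eq_mul_inv_Gamma_add_one (ν + 1)] at heq
  linear_combination heq

theorem besselClifford_zero (ν : ℝ) : besselClifford ν 0 = (Real.Gamma (ν + 1))⁻¹ := by
  rw [besselClifford, tsum_eq_single 0 fun m hm ↦ by simp [hm]]
  simp

theorem besselClifford_zero_pos {ν : ℝ} (hν : -1 < ν) : 0 < besselClifford ν 0 := by
  rw [besselClifford_zero, inv_pos]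
  exact Real.Gamma_pos_of_pos (by linarith)

theorem besselJ_eq (ν x : ℝ) :
    besselJ ν x = (x / 2) ^ ν * besselClifford ν (-(x / 2) ^ 2) := by
  rw [besselJ, besselClifford, ← tsum_mul_left]
  refine tsum_congr fun m ↦ ?_
  rw [neg_pow ((x / 2) ^ 2), ← pow_mul]
  ring

theorem besselJ_eq_zero_iff {ν x : ℝ} (hx : 0 < x) :
    besselJ ν x = 0 ↔ besselClifford ν (-(x / 2) ^ 2) = 0 := by
  rw [besselJ_eq, mul_eq_zero, or_iff_right (by positivity)]

end BesselClifford

section RadialSolution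

variable {E : Type*} [NormedAddCommGroup E] [InnerProductSpace ℝ E]

theorem contDiff_besselClifford_norm_sub_sq (ν c : ℝ) (x₀ : E) (k : ℕ) :
    ContDiff ℝ k fun y : E ↦ besselClifford ν (c * ‖y - x₀‖ ^ 2) :=
  (contDiff_besselClifford ν k).comp <|
    contDiff_const.mul ((contDiff_id.sub contDiff_const).norm_sq ℝ)

variable [FiniteDimensional ℝ E]

theorem laplacian_besselClifford_norm_sub_sq (c : ℝ) (x₀ x : E) :
    Δ (fun y ↦ besselClifford (((finrank ℝ E : ℝ) - 2) / 2) (c * ‖y - x₀‖ ^ 2)) x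
      = 4 * c * besselClifford (((finrank ℝ E : ℝ) - 2) / 2) (c * ‖x - x₀‖ ^ 2) := by
  set ν := ((finrank ℝ E : ℝ) - 2) / 2 with hν
  have hderiv (s : ℝ) : deriv (fun s ↦ besselClifford ν (c * s)) s
      = c * besselClifford (ν + 1) (c * s) := by
    rw [deriv_comp_mul_left, deriv_besselClifford, smul_eq_mul]
  have hderiv₂ (s : ℝ) : iteratedDeriv 2 (fun s ↦ besselClifford ν (c * s)) s
      = c ^ 2 * besselClifford (ν + 2) (c * s) := by
    rw [iteratedDeriv_comp_const_mul (contDiff_besselClifford ν 2), iteratedDeriv_succ,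
      iteratedDeriv_one, deriv_besselClifford, deriv_besselClifford, add_assoc, one_add_one_eq_two]
  have hsmooth : ContDiff ℝ 2 fun s ↦ besselClifford ν (c * s) :=
    (contDiff_besselClifford ν 2).comp (contDiff_const.mul contDiff_id)
  rw [laplacian_comp_norm_sub_sq hsmooth.contDiffAt, hderiv₂, hderiv, smul_eq_mul, smul_eq_mul,
    ← mul_besselClifford_add_two_add ν (c * ‖x - x₀‖ ^ 2)]
  linear_combination (-4 * c * besselClifford (ν + 1) (c * ‖x - x₀‖ ^ 2)) * hν

end RadialSolution

section FirstZero

variable {E : Type*} [NormedAddCommGroup E] [InnerProductSpace ℝ E] [FiniteDimensional ℝ E]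

theorem laplacian_sub_norm_sq_sq (a : ℝ) (x : E) :
    Δ (fun y : E ↦ (a - ‖y‖ ^ 2) ^ 2) x = 8 * ‖x‖ ^ 2 - 4 * finrank ℝ E * (a - ‖x‖ ^ 2) := by
  have hderiv : deriv (fun s : ℝ ↦ (a - s) ^ 2) = fun s ↦ -2 * (a - s) := by
    ext s
    simpa using (((hasDerivAt_id s).const_sub a).fun_pow 2).deriv
  have hderiv₂ (s : ℝ) : iteratedDeriv 2 (fun s : ℝ ↦ (a - s) ^ 2) s = 2 := by
    rw [iteratedDeriv_succ, iteratedDeriv_one, hderiv]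
    simp
  have hΔ := laplacian_comp_norm_sub_sq (f := fun s : ℝ ↦ (a - s) ^ 2)
    (x₀ := (0 : E)) (x := x) (by fun_prop)
  simp only [sub_zero, hderiv, hderiv₂, smul_eq_mul] at hΔ
  rw [hΔ]
  ring

theorem exists_nonpos_of_laplacian_add_nonpos [Nontrivial E] {w : E → ℝ}
    (hwc : ContinuousOn w (closedBall 0 (finrank ℝ E + 2)))
    (hw : ContDiffOn ℝ 2 w (ball 0 (finrank ℝ E + 2)))
    (hw_super : ∀ x ∈ ball 0 (finrank ℝ E + 2 : ℝ), Δ w x + w x ≤ 0) :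
    ∃ x ∈ closedBall (0 : E) (finrank ℝ E + 2), w x ≤ 0 := by
  by_contra! hpos
  have hR : (0 : ℝ) < finrank ℝ E + 2 := by positivity
  set R : ℝ := finrank ℝ E + 2 with hR_def
  -- This test function vanishes on the sphere of radius `R`, and the choice `R = n + 2` makes
  -- `Δv + v` a sum of two squares.
  set v : E → ℝ := fun y ↦ (R ^ 2 - ‖y‖ ^ 2) ^ 2 with hv_def
  have hv : ContDiff ℝ 2 v := (contDiff_const.sub (contDiff_id.norm_sq ℝ)).pow 2
  have hv_sub (y : E) : 0 ≤ Δ v y + 1 * v y := by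
    calc (0 : ℝ) ≤ (R ^ 2 - ‖y‖ ^ 2 - 2 * R) ^ 2 + 4 * R ^ 2 := by positivity
      _ = Δ v y + 1 * v y := by
        rw [hv_def, laplacian_sub_norm_sq_sq, hR_def]
        ring
  have hv_frontier (y) (hy : y ∈ frontier (ball (0 : E) R)) : v y = 0 := by
    rw [frontier_ball 0 hR.ne', mem_sphere_zero_iff_norm] at hy
    simp [hv_def, hy]
  have hv_center : 0 < v 0 := by
    simp only [hv_def, norm_zero, zero_pow two_ne_zero, sub_zero]
    positivity
  rw [← closure_ball 0 hR.ne'] at hwc hpos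
  exact hv_center.not_ge <| nonpos_of_laplacian_add_mul_nonneg isOpen_ball isBounded_ball
    (fun _ _ ↦ zero_le_one) hwc hw hpos (by simpa only [one_mul] using hw_super)
    hv.continuous.continuousOn hv.contDiffOn (fun y _ ↦ hv_sub y)
    (fun y hy ↦ (hv_frontier y hy).le) (subset_closure (mem_ball_self hR))

theorem neg_one_lt_sub_two_div_two {n : ℕ} (hn : 1 ≤ n) : -1 < ((n : ℝ) - 2) / 2 := by
  have : (1 : ℝ) ≤ n := mod_cast hn
  linarith

theorem exists_besselClifford_eq_zero {n : ℕ} (hn : 1 ≤ n) :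
    ∃ t : ℝ, 0 ≤ t ∧ besselClifford (((n : ℝ) - 2) / 2) (-(t / 2) ^ 2) = 0 := by
  let E := EuclideanSpace ℝ (Fin n)
  have hfinrank : finrank ℝ E = n := finrank_euclideanSpace_fin
  have : Nontrivial E := nontrivial_of_finrank_pos (R := ℝ) (by omega)
  set ν := ((n : ℝ) - 2) / 2
  have hw : ContDiff ℝ 2 fun y : E ↦ besselClifford ν (-(1 / 4) * ‖y - 0‖ ^ 2) :=
    contDiff_besselClifford_norm_sub_sq ν _ 0 2
  obtain ⟨x, -, hx⟩ := exists_nonpos_of_laplacian_add_nonpos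
    hw.continuous.continuousOn hw.contDiffOn fun y _ ↦ by
      have hΔ := laplacian_besselClifford_norm_sub_sq (-(1 / 4)) 0 y
      rw [hfinrank] at hΔ
      linarith
  have hxle : besselClifford ν (-(‖x‖ / 2) ^ 2) ≤ 0 := by
    convert hx using 2
    rw [sub_zero]
    ring
  obtain ⟨t, ht, hzero⟩ := intermediate_value_Icc' (norm_nonneg x)
    (continuous_besselClifford_neg_half_sq ν).continuousOn
    ⟨hxle, by simpa using (besselClifford_zero_pos (neg_one_lt_sub_two_div_two hn)).le⟩
  exact ⟨t, ht.1, hzero⟩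

theorem isLeast_besselZero {n : ℕ} (hn : 1 ≤ n) :
    IsLeast {t | 0 < t ∧ besselJ (((n : ℝ) - 2) / 2) t = 0} (besselZero n) := by
  set ν := ((n : ℝ) - 2) / 2
  have hset : {t | 0 < t ∧ besselJ ν t = 0}
      = Ici 0 ∩ {t | besselClifford ν (-(t / 2) ^ 2) = 0} := by
    ext t
    refine ⟨fun ⟨ht, hzero⟩ ↦ ⟨ht.le, (besselJ_eq_zero_iff ht).1 hzero⟩, fun ⟨ht, hzero⟩ ↦ ?_⟩
    have ht_pos : 0 < t := by
      refine lt_of_le_of_ne ht ?_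
      rintro rfl
      exact (besselClifford_zero_pos (neg_one_lt_sub_two_div_two hn)).ne' (by simpa using hzero)
    exact ⟨ht_pos, (besselJ_eq_zero_iff ht_pos).2 hzero⟩
  have hbdd : BddBelow {t | 0 < t ∧ besselJ ν t = 0} := ⟨0, fun _ ht ↦ ht.1.le⟩
  refine ⟨IsClosed.csInf_mem ?_ ?_ hbdd, fun _ ht ↦ csInf_le hbdd ht⟩
  · rw [hset]
    exact isClosed_Ici.inter <|
      isClosed_eq (continuous_besselClifford_neg_half_sq ν) continuous_const
  · rw [hset]
    exact exists_besselClifford_eq_zero hn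

end FirstZero

section NonvanishingBall

variable {E : Type*} [NormedAddCommGroup E] [InnerProductSpace ℝ E] [FiniteDimensional ℝ E]
  [Nontrivial E] {x₀ : E} {r lam : ℝ}

theorem mul_lt_besselZero_of_pos_of_laplacian_add_nonpos {w : E → ℝ} (hr : 0 < r)
    (hwc : ContinuousOn w (closedBall x₀ r)) (hw : ContDiffOn ℝ 2 w (ball x₀ r))
    (hw_pos : ∀ x ∈ closedBall x₀ r, 0 < w x)
    (hw_super : ∀ x ∈ ball x₀ r, Δ w x + lam ^ 2 * w x ≤ 0) :
    lam * r < besselZero (finrank ℝ E) := by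
  by_contra! hle
  obtain ⟨⟨ht, hzero⟩, -⟩ := isLeast_besselZero (finrank_pos (R := ℝ) (M := E))
  set t := besselZero (finrank ℝ E)
  set ν := ((finrank ℝ E : ℝ) - 2) / 2
  rw [besselJ_eq_zero_iff ht] at hzero
  have hk : (t / r) ^ 2 ≤ lam ^ 2 := by
    gcongr
    exact (div_le_iff₀ hr).2 hle
  rw [← closure_ball x₀ hr.ne'] at hwc hw_pos
  have hw_super' (y) (hy : y ∈ ball x₀ r) : Δ w y + (t / r) ^ 2 * w y ≤ 0 := by
    have := mul_le_mul_of_nonneg_right hk (hw_pos y (subset_closure hy)).le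
    linarith [hw_super y hy]
  set v : E → ℝ := fun y ↦ besselClifford ν (-(t / r / 2) ^ 2 * ‖y - x₀‖ ^ 2) with hv_def
  have hv : ContDiff ℝ 2 v := contDiff_besselClifford_norm_sub_sq ν _ x₀ 2
  have hv_eq (y) : Δ v y + (t / r) ^ 2 * v y = 0 := by
    rw [hv_def, laplacian_besselClifford_norm_sub_sq]
    ring
  have hv_frontier (y) (hy : y ∈ frontier (ball x₀ r)) : v y = 0 := by
    rw [frontier_ball x₀ hr.ne', mem_sphere_iff_norm] at hy
    have hscale : -(t / r / 2) ^ 2 * r ^ 2 = -(t / 2) ^ 2 := by field_simp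
    simp only [hv_def, hy, hscale, hzero]
  have hv_center : 0 < v x₀ := by
    simpa [hv_def] using besselClifford_zero_pos (neg_one_lt_sub_two_div_two finrank_pos)
  exact hv_center.not_ge <| nonpos_of_laplacian_add_mul_nonneg isOpen_ball isBounded_ball
    (fun _ _ ↦ sq_nonneg (t / r)) hwc hw hw_pos hw_super' hv.continuous.continuousOn hv.contDiffOn
    (fun y _ ↦ (hv_eq y).ge) (fun y hy ↦ (hv_frontier y hy).le)
    (subset_closure (mem_ball_self hr))

theorem helmholtz_nonvanishing_ball_radius_general {u : E → ℝ} (hr : 0 < r)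
    (huc : ContinuousOn u (closedBall x₀ r)) (hu : ContDiffOn ℝ 2 u (ball x₀ r))
    (hu_super : ∀ x ∈ ball x₀ r, u x * (Δ u x + lam ^ 2 * u x) ≤ 0)
    (hu_ne : ∀ x ∈ closedBall x₀ r, u x ≠ 0) :
    lam * r < besselZero (finrank ℝ E) := by
  have hsign : EqOn u (fun x ↦ |u x|) (closedBall x₀ r)
      ∨ EqOn u (-fun x ↦ |u x|) (closedBall x₀ r) :=
    (convex_closedBall x₀ r).isPreconnected.eq_or_eq_neg_of_sq_eq huc huc.abs
      (fun x _ ↦ (sq_abs (u x)).symm) fun {x} hx ↦ abs_ne_zero.2 (hu_ne x hx)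
  rcases hsign with hsign | hsign
  · have hpos (x) (hx : x ∈ closedBall x₀ r) : 0 < u x :=
      (abs_pos.2 (hu_ne x hx)).trans_eq (hsign hx).symm
    exact mul_lt_besselZero_of_pos_of_laplacian_add_nonpos hr huc hu hpos fun x hx ↦
      nonpos_of_mul_nonpos_right (hu_super x hx) (hpos x (ball_subset_closedBall hx))
  · have hpos (x) (hx : x ∈ closedBall x₀ r) : 0 < (-u) x :=
      (abs_pos.2 (hu_ne x hx)).trans_eq (neg_eq_iff_eq_neg.2 (hsign hx)).symm
    refine mul_lt_besselZero_of_pos_of_laplacian_add_nonpos hr huc.neg hu.neg hpos fun x hx ↦ ?_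
    refine nonpos_of_mul_nonpos_right ?_ (hpos x (ball_subset_closedBall hx))
    simp only [laplacian_neg, Pi.neg_apply]
    linarith [hu_super x hx]

end NonvanishingBall

theorem lap_eq_laplacian {n : ℕ} {u : EuclideanSpace ℝ (Fin n) → ℝ}
    {x : EuclideanSpace ℝ (Fin n)} (hu : ContDiffAt ℝ 2 u x) : lap u x = Δ u x := by
  have hdiff : DifferentiableAt ℝ (fderiv ℝ u) x :=
    (hu.fderiv_right (m := 1) le_rfl).differentiableAt one_ne_zero
  simp [lap, laplacian_eq_iteratedFDeriv_orthonormalBasis u (EuclideanSpace.basisFun (Fin n) ℝ),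
    iteratedFDeriv_two_apply, fderiv_clm_apply hdiff (differentiableAt_const _)]

/-- a real solution of the Helmholtz equation `Δu + λ²u = 0` on `ℝⁿ` which is
nonvanishing on a closed ball of radius `r` forces `λ r < c_n`; equivalently every real
Helmholtz solution vanishes somewhere in every closed ball of radius `c_n / λ`. -/
theorem helmholtz_nonvanishing_ball_radius {n : ℕ} (hn : 1 ≤ n)
    (lam : ℝ) (hlam : 0 < lam)
    (u : EuclideanSpace ℝ (Fin n) → ℝ) (hu : ContDiff ℝ 2 u)
    (hueq : ∀ x, lap u x + lam ^ 2 * u x = 0)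
    (x₀ : EuclideanSpace ℝ (Fin n)) (r : ℝ) (hr : 0 < r)
    (hnonvan : ∀ x ∈ closedBall x₀ r, u x ≠ 0) :
    lam * r < besselZero n := by
  have : Nontrivial (EuclideanSpace ℝ (Fin n)) :=
    nontrivial_of_finrank_pos (R := ℝ) (by rwa [finrank_euclideanSpace_fin])
  rw [← finrank_euclideanSpace_fin (𝕜 := ℝ) (n := n)]
  refine helmholtz_nonvanishing_ball_radius_general hr hu.continuous.continuousOn hu.contDiffOn
    (fun x _ ↦ ?_) hnonvan
  rw [← lap_eq_laplacian hu.contDiffAt, hueq, mul_zero]
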